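/- arXiv:2003.00758 — 4 statements merged into one kernel-verified Lean document; each statement's English description precedes it below -/
import Mathlib

section
/- For each n ∈ ℕ let (a_{n,k})_{k∈ℕ} and (b_{n,k})_{k∈ℕ} be sequences of positive real numbers such that L_n(s) = ∑_{k=1}^∞ a_{n,k} e^{−s b_{n,k}} converges for every complex s with Re(s) > 1. Suppose that for every real s > 1 one has (D_s L_n)(s) → 0 as n → ∞ (where D_s is applied to the restriction of L_n to real arguments). Then for every complex s with Re(s) > 1 one has L_n(s) → 0 as n → ∞, and moreover for every α > 1 the convergence L_n(s) → 0 is uniform on the half-plane {s ∈ ℂ : Re(s) ≥ α}. -/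
open Filter Real Complex Topology

/-!
Write `F_n t` for the restriction of `L_n` to real `t > 1`. It is differentiable, being the
restriction of a holomorphic function, and it is decreasing because `a n k` and `b n k` are positive.
Hence `-(F_n t / t)' = -F_n' t / t + F_n t / t ^ 2 ≥ F_n t / t ^ 2` (`tsum_le_sq_mul`), so
`0 ≤ F_n t ≤ t ^ 2 * (D_t F_n) t → 0`. Finally `‖L_n s‖ ≤ F_n α` as soon as `α ≤ re s`
(`norm_tsum_le_of_le_re`), which gives uniform convergence on half-planes, and with it
pointwise convergence.
-/

lemma norm_term {a b : ℝ} (ha : 0 < a) (s : ℂ) :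
    ‖(a : ℂ) * Complex.exp (-(s * (b : ℂ)))‖ = a * Real.exp (-(s.re * b)) := by
  rw [norm_mul, Complex.norm_exp, Complex.norm_real, Real.norm_of_nonneg ha.le]
  simp

lemma exp_term_le {a b : ℝ} (ha : 0 < a) (hb : 0 < b) {x y : ℝ} (hxy : x ≤ y) :
    a * Real.exp (-(y * b)) ≤ a * Real.exp (-(x * b)) := by
  gcongr

section

variable {a b : ℕ → ℝ}

lemma summable_real (ha : ∀ k, 0 < a k)
    (hconv : ∀ s : ℂ, 1 < s.re →
      Summable (fun k => (a k : ℂ) * Complex.exp (-(s * (b k : ℂ)))))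
    {t : ℝ} (ht : 1 < t) : Summable (fun k => a k * Real.exp (-(t * b k))) := by
  refine (hconv t (by simpa using ht)).norm.congr fun k => ?_
  rw [norm_term (ha k), Complex.ofReal_re]

lemma norm_tsum_le_of_le_re (ha : ∀ k, 0 < a k) (hb : ∀ k, 0 < b k)
    (hconv : ∀ s : ℂ, 1 < s.re →
      Summable (fun k => (a k : ℂ) * Complex.exp (-(s * (b k : ℂ)))))
    {α : ℝ} (hα : 1 < α) {s : ℂ} (hs : α ≤ s.re) :
    ‖∑' k, (a k : ℂ) * Complex.exp (-(s * (b k : ℂ)))‖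
      ≤ ∑' k, a k * Real.exp (-(α * b k)) := by
  refine tsum_of_norm_bounded (summable_real ha hconv hα).hasSum fun k => ?_
  rw [norm_term (ha k)]
  exact exp_term_le (ha k) (hb k) hs

lemma differentiableAt_tsum (ha : ∀ k, 0 < a k) (hb : ∀ k, 0 < b k)
    (hconv : ∀ s : ℂ, 1 < s.re →
      Summable (fun k => (a k : ℂ) * Complex.exp (-(s * (b k : ℂ)))))
    {t : ℝ} (ht : 1 < t) :
    DifferentiableAt ℝ (fun t : ℝ => ∑' k, a k * Real.exp (-(t * b k))) t := by
  obtain ⟨c, hc, hct⟩ := exists_between ht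
  -- On `c < re s` the series is dominated by its value at `c`, so its sum is holomorphic there.
  have hopen : IsOpen {s : ℂ | c < s.re} := isOpen_lt continuous_const Complex.continuous_re
  have hdiff : DifferentiableOn ℂ
      (fun s : ℂ => ∑' k, (a k : ℂ) * Complex.exp (-(s * (b k : ℂ)))) {s : ℂ | c < s.re} := by
    refine Complex.differentiableOn_tsum_of_summable_norm (summable_real ha hconv hc)
      (fun k => ?_) hopen (fun k s hs => ?_)
    · fun_prop
    · rw [norm_term (ha k)]
      exact exp_term_le (ha k) (hb k) (le_of_lt hs)
  have hre := ((hdiff.differentiableAt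
    (hopen.mem_nhds (show c < (t : ℂ).re by simpa using hct))).hasDerivAt).real_of_complex
  refine hre.differentiableAt.congr_of_eventuallyEq (Eventually.of_forall fun x => ?_)
  beta_reduce
  rw [← Complex.ofReal_re (∑' k, a k * Real.exp (-(x * b k))), Complex.ofReal_tsum]
  push_cast
  rfl

lemma deriv_tsum_nonpos (ha : ∀ k, 0 < a k) (hb : ∀ k, 0 < b k)
    (hconv : ∀ s : ℂ, 1 < s.re →
      Summable (fun k => (a k : ℂ) * Complex.exp (-(s * (b k : ℂ)))))
    {t : ℝ} (ht : 1 < t) :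
    deriv (fun t : ℝ => ∑' k, a k * Real.exp (-(t * b k))) t ≤ 0 := by
  have hanti : AntitoneOn (fun t : ℝ => ∑' k, a k * Real.exp (-(t * b k))) (Set.Ioi 1) :=
    fun x hx y hy hxy => (summable_real ha hconv hy).tsum_le_tsum
      (fun k => exp_term_le (ha k) (hb k) hxy) (summable_real ha hconv hx)
  rw [← derivWithin_of_isOpen isOpen_Ioi (Set.mem_Ioi.2 ht)]
  exact hanti.derivWithin_nonpos

/-- The value of the series is controlled by `D_t`, since the other term `-F' t / t` of
`-(F t / t)'` is nonnegative. -/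
lemma tsum_le_sq_mul (ha : ∀ k, 0 < a k) (hb : ∀ k, 0 < b k)
    (hconv : ∀ s : ℂ, 1 < s.re →
      Summable (fun k => (a k : ℂ) * Complex.exp (-(s * (b k : ℂ)))))
    {t : ℝ} (ht : 1 < t) :
    ∑' k, a k * Real.exp (-(t * b k)) ≤
      t ^ 2 * -deriv (fun t : ℝ => (∑' k, a k * Real.exp (-(t * b k))) / t) t := by
  have ht0 : 0 < t := by linarith
  have hd := (differentiableAt_tsum ha hb hconv ht).hasDerivAt.fun_div (hasDerivAt_id' t) ht0.ne'
  have hneg := deriv_tsum_nonpos ha hb hconv ht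
  rw [hd.deriv, mul_neg, mul_div_cancel₀ _ (by positivity)]
  nlinarith [mul_nonneg (neg_nonneg.2 hneg) ht0.le]

end

/-- For each `n`, let `(a n k)` and `(b n k)` be positive reals such that
`L_n s = ∑' k, a n k * exp (-(s * b n k))` converges for every complex `s` with `re s > 1`.
If for every real `s > 1` the quantity `(D_s L_n) s = -(d/ds)(L_n s / s)` (formed from the
restriction of `L_n` to real arguments) tends to `0` as `n → ∞`, then `L_n s → 0` for every
complex `s` with `re s > 1`, and for every `α > 1` the convergence is uniform on
`{s : ℂ | α ≤ re s}`. -/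
theorem statement2 (a b : ℕ → ℕ → ℝ) (ha : ∀ n k, 0 < a n k) (hb : ∀ n k, 0 < b n k)
    (hconv : ∀ n, ∀ s : ℂ, 1 < s.re →
      Summable (fun k => (a n k : ℂ) * Complex.exp (-(s * (b n k : ℂ)))))
    (hD : ∀ s : ℝ, 1 < s →
      Tendsto (fun n => -deriv (fun t : ℝ => (∑' k, a n k * Real.exp (-(t * b n k))) / t) s)
        atTop (𝓝 0)) :
    (∀ s : ℂ, 1 < s.re →
      Tendsto (fun n => ∑' k, (a n k : ℂ) * Complex.exp (-(s * (b n k : ℂ))))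
        atTop (𝓝 0)) ∧
    (∀ α : ℝ, 1 < α →
      TendstoUniformlyOn
        (fun n (s : ℂ) => ∑' k, (a n k : ℂ) * Complex.exp (-(s * (b n k : ℂ))))
        0 atTop {s : ℂ | α ≤ s.re}) := by
  have hreal : ∀ α : ℝ, 1 < α →
      Tendsto (fun n => ∑' k, a n k * Real.exp (-(α * b n k))) atTop (𝓝 0) := fun α hα =>
    squeeze_zero (fun n => tsum_nonneg fun k => mul_nonneg (ha n k).le (Real.exp_pos _).le)
      (fun n => tsum_le_sq_mul (ha n) (hb n) (hconv n) hα)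
      (by simpa only [mul_zero] using (hD α hα).const_mul (α ^ 2))
  have hunif : ∀ α : ℝ, 1 < α →
      TendstoUniformlyOn
        (fun n (s : ℂ) => ∑' k, (a n k : ℂ) * Complex.exp (-(s * (b n k : ℂ))))
        0 atTop {s : ℂ | α ≤ s.re} := by
    intro α hα
    rw [Metric.tendstoUniformlyOn_iff]
    intro ε hε
    filter_upwards [(hreal α hα).eventually_lt_const hε] with n hn s hs
    rw [Pi.zero_apply, dist_zero_left]
    exact (norm_tsum_le_of_le_re (ha n) (hb n) (hconv n) hα hs).trans_lt hn
  exact ⟨fun s hs => (hunif s.re hs).tendsto_at (le_refl s.re), hunif⟩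
end

section
/- Let ε > 0 and let (ℓ_i)_{i∈ℕ} be a sequence of real numbers with ℓ_i ≥ ε for all i and ∑_{i} e^{−σ ℓ_i} < ∞ for every real σ > 1. Then the double product Z(s) = ∏_{i∈ℕ} ∏_{k=0}^∞ (1 − e^{−(s+k)ℓ_i}) converges absolutely and locally uniformly on the half-plane {s ∈ ℂ : Re(s) > 1}, defines a holomorphic function there with no zeros, and its logarithmic derivative satisfies Z′(s)/Z(s) = ∑_{i∈ℕ} ∑_{k=0}^∞ ℓ_i · e^{−(s+k)ℓ_i} / (1 − e^{−(s+k)ℓ_i}) for all s with Re(s) > 1. -/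
/-!
Writing `p = (i, k)`, the terms `exp (-(s + k) ℓ i)` have norm `exp (-(σ + k) ℓ i)` with `σ = re s`,
and since `ℓ i ≥ ε` this is at most `exp (-σ ℓ i) * exp (-ε) ^ k`, a product of two summable
families (`summable_exp_pair`). The bound is monotone in `σ`, so the Weierstrass M-test on each
half-plane `re s > σ₀ > 1` gives a locally uniformly convergent product over `ℕ × ℕ`
(`hasProdLocallyUniformlyOn_selberg`), whose value is the iterated product `selbergZeta`
(`tprod_pair_eq_selbergZeta`). Holomorphy follows; the product does not vanish because it converges
absolutely and every factor satisfies `‖1 - exp (-(s + k) ℓ i)‖ ≥ 1 - exp (-ε) > 0`.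

The logarithmic derivative may be taken termwise as soon as the resulting double series converges
absolutely (`summable_logDeriv_pair`). The denominators are bounded below as above, and the factor
`ℓ i` is absorbed by `ℓ i ≤ δ⁻¹ * exp (δ ℓ i)` with `δ = (σ - 1) / 2`, which only shifts `σ` to
`σ - δ > 1`.
-/

open Filter Real Complex

/-- The abstract Selberg zeta function attached to a sequence of lengths `ℓ i`:
`Z s = ∏_i ∏_{k ≥ 0} (1 - exp (-(s + k) * ℓ i))`. -/
noncomputable def selbergZeta (ℓ : ℕ → ℝ) (s : ℂ) : ℂ :=
  ∏' i : ℕ, ∏' k : ℕ, (1 - Complex.exp (-((s + (k : ℂ)) * (ℓ i : ℂ))))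

/-- The term `exp (-(s + k) * ℓ i)` of the double product, indexed by the pair `p = (i, k)`. -/
noncomputable def selbergTerm (ℓ : ℕ → ℝ) (p : ℕ × ℕ) (s : ℂ) : ℂ :=
  Complex.exp (-((s + (p.2 : ℂ)) * (ℓ p.1 : ℂ)))

lemma norm_selbergTerm (ℓ : ℕ → ℝ) (p : ℕ × ℕ) (s : ℂ) :
    ‖selbergTerm ℓ p s‖ = Real.exp (-((s.re + p.2) * ℓ p.1)) := by
  simp [selbergTerm, Complex.norm_exp]

lemma hasDerivAt_one_sub_selbergTerm (ℓ : ℕ → ℝ) (p : ℕ × ℕ) (s : ℂ) :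
    HasDerivAt (fun z => 1 - selbergTerm ℓ p z) (ℓ p.1 * selbergTerm ℓ p s) s := by
  have h := (((((hasDerivAt_id s).add_const (p.2 : ℂ)).mul_const (ℓ p.1 : ℂ)).neg).cexp).const_sub 1
  refine h.congr_deriv ?_
  simp only [selbergTerm, id, Pi.neg_apply]
  ring

lemma differentiable_one_sub_selbergTerm (ℓ : ℕ → ℝ) (p : ℕ × ℕ) :
    Differentiable ℂ (fun z => 1 - selbergTerm ℓ p z) :=
  fun s => (hasDerivAt_one_sub_selbergTerm ℓ p s).differentiableAt

/-- Comparison with the product of `∑ exp (-σ ℓ i)` and the geometric series of ratio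
`exp (-ε)`. -/
lemma summable_exp_pair {ε : ℝ} (hε : 0 < ε) {ℓ : ℕ → ℝ} (hℓ : ∀ i, ε ≤ ℓ i)
    (hsum : ∀ σ : ℝ, 1 < σ → Summable (fun i => Real.exp (-(σ * ℓ i))))
    {σ : ℝ} (hσ : 1 < σ) :
    Summable (fun p : ℕ × ℕ => Real.exp (-((σ + p.2) * ℓ p.1))) := by
  have hgeo : Summable (fun k : ℕ => Real.exp (-ε) ^ k) :=
    summable_geometric_of_lt_one (Real.exp_pos _).le (by simpa using hε)
  refine ((hsum σ hσ).mul_of_nonneg hgeo (fun i => (Real.exp_pos _).le)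
    (fun k => by positivity)).of_nonneg_of_le (fun p => (Real.exp_pos _).le) fun p => ?_
  rw [← Real.exp_nat_mul, ← Real.exp_add, Real.exp_le_exp]
  nlinarith [mul_le_mul_of_nonneg_left (hℓ p.1) (Nat.cast_nonneg (α := ℝ) p.2)]

lemma norm_selbergTerm_le {ε : ℝ} (hε : 0 < ε) {ℓ : ℕ → ℝ} (hℓ : ∀ i, ε ≤ ℓ i)
    (p : ℕ × ℕ) {s : ℂ} (hs : 1 < s.re) : ‖selbergTerm ℓ p s‖ ≤ Real.exp (-ε) := by
  rw [norm_selbergTerm, Real.exp_le_exp]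
  have hk : (0 : ℝ) ≤ p.2 := Nat.cast_nonneg _
  nlinarith [hℓ p.1, mul_nonneg (by linarith : 0 ≤ s.re + p.2 - 1) (hε.le.trans (hℓ p.1))]

lemma le_norm_one_sub_selbergTerm {ε : ℝ} (hε : 0 < ε) {ℓ : ℕ → ℝ} (hℓ : ∀ i, ε ≤ ℓ i)
    (p : ℕ × ℕ) {s : ℂ} (hs : 1 < s.re) :
    1 - Real.exp (-ε) ≤ ‖1 - selbergTerm ℓ p s‖ := by
  have h := norm_sub_norm_le (1 : ℂ) (selbergTerm ℓ p s)
  rw [norm_one] at h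
  linarith [norm_selbergTerm_le hε hℓ p hs]

lemma one_sub_selbergTerm_ne_zero {ε : ℝ} (hε : 0 < ε) {ℓ : ℕ → ℝ} (hℓ : ∀ i, ε ≤ ℓ i)
    (p : ℕ × ℕ) {s : ℂ} (hs : 1 < s.re) : 1 - selbergTerm ℓ p s ≠ 0 := by
  have h1 : Real.exp (-ε) < 1 := by simpa using hε
  rw [← norm_pos_iff]
  linarith [le_norm_one_sub_selbergTerm hε hℓ p hs]

lemma summable_norm_selbergTerm {ε : ℝ} (hε : 0 < ε) {ℓ : ℕ → ℝ} (hℓ : ∀ i, ε ≤ ℓ i)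
    (hsum : ∀ σ : ℝ, 1 < σ → Summable (fun i => Real.exp (-(σ * ℓ i))))
    {s : ℂ} (hs : 1 < s.re) :
    Summable (fun p => ‖selbergTerm ℓ p s‖) := by
  simpa only [norm_selbergTerm] using summable_exp_pair hε hℓ hsum hs

lemma tprod_pair_eq_selbergZeta {ε : ℝ} (hε : 0 < ε) {ℓ : ℕ → ℝ} (hℓ : ∀ i, ε ≤ ℓ i)
    (hsum : ∀ σ : ℝ, 1 < σ → Summable (fun i => Real.exp (-(σ * ℓ i))))
    {s : ℂ} (hs : 1 < s.re) :
    ∏' p, (1 - selbergTerm ℓ p s) = selbergZeta ℓ s := by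
  have hS := summable_norm_selbergTerm hε hℓ hsum hs
  have hm : Multipliable (fun p => 1 - selbergTerm ℓ p s) := by
    simpa only [sub_eq_add_neg] using
      multipliable_one_add_of_summable (f := fun p => -selbergTerm ℓ p s) (by simpa using hS)
  -- `ℂ` is not a multiplicative group, so convergence of each inner product needs its own proof.
  refine hm.tprod_prod' fun i => ?_
  simpa only [sub_eq_add_neg] using
    multipliable_one_add_of_summable (f := fun k => -selbergTerm ℓ (i, k) s)
      (by simpa using hS.prod_factor i)

lemma hasProdLocallyUniformlyOn_selberg {ε : ℝ} (hε : 0 < ε) {ℓ : ℕ → ℝ} (hℓ : ∀ i, ε ≤ ℓ i)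
    (hsum : ∀ σ : ℝ, 1 < σ → Summable (fun i => Real.exp (-(σ * ℓ i)))) :
    HasProdLocallyUniformlyOn (fun p s => 1 - selbergTerm ℓ p s) (selbergZeta ℓ)
      {s : ℂ | 1 < s.re} := by
  intro u hu x hx
  have hx : 1 < x.re := hx
  obtain ⟨σ, hσ, hσx⟩ := exists_between hx
  have hopen : IsOpen {s : ℂ | σ < s.re} := isOpen_lt continuous_const Complex.continuous_re
  have hprod : HasProdLocallyUniformlyOn (fun p s => 1 + -selbergTerm ℓ p s)
      (fun s => ∏' p, (1 + -selbergTerm ℓ p s)) {s : ℂ | σ < s.re} := by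
    refine (summable_exp_pair hε hℓ hsum hσ).hasProdLocallyUniformlyOn_one_add hopen
      (.of_forall fun p s hs => ?_) fun p => ?_
    · have hs : σ < s.re := hs
      rw [norm_neg, norm_selbergTerm, Real.exp_le_exp]
      nlinarith [mul_nonneg (sub_nonneg.2 hs.le) (hε.le.trans (hℓ p.1))]
    · unfold selbergTerm
      fun_prop
  obtain ⟨t, ht, hev⟩ := hprod u hu x hσx
  rw [hopen.nhdsWithin_eq hσx] at ht
  refine ⟨t ∩ {s : ℂ | σ < s.re},
    mem_nhdsWithin_of_mem_nhds (Filter.inter_mem ht (hopen.mem_nhds hσx)), hev.mono ?_⟩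
  rintro N hN y ⟨hyt, hy⟩
  have hy : σ < y.re := hy
  simpa only [← sub_eq_add_neg, tprod_pair_eq_selbergZeta hε hℓ hsum (hσ.trans hy)] using hN y hyt

lemma selbergZeta_ne_zero {ε : ℝ} (hε : 0 < ε) {ℓ : ℕ → ℝ} (hℓ : ∀ i, ε ≤ ℓ i)
    (hsum : ∀ σ : ℝ, 1 < σ → Summable (fun i => Real.exp (-(σ * ℓ i))))
    {s : ℂ} (hs : 1 < s.re) : selbergZeta ℓ s ≠ 0 := by
  rw [← tprod_pair_eq_selbergZeta hε hℓ hsum hs]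
  simpa only [sub_eq_add_neg] using
    tprod_one_add_ne_zero_of_summable (f := fun p => -selbergTerm ℓ p s)
      (fun p => by simpa only [sub_eq_add_neg] using one_sub_selbergTerm_ne_zero hε hℓ p hs)
      (by simpa using summable_norm_selbergTerm hε hℓ hsum hs)

lemma summable_logDeriv_pair {ε : ℝ} (hε : 0 < ε) {ℓ : ℕ → ℝ} (hℓ : ∀ i, ε ≤ ℓ i)
    (hsum : ∀ σ : ℝ, 1 < σ → Summable (fun i => Real.exp (-(σ * ℓ i))))
    {s : ℂ} (hs : 1 < s.re) :
    Summable (fun p : ℕ × ℕ => ℓ p.1 * selbergTerm ℓ p s / (1 - selbergTerm ℓ p s)) := by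
  have hc : 0 < 1 - Real.exp (-ε) := by simpa using hε
  set δ : ℝ := (s.re - 1) / 2 with hδ
  have hδ0 : 0 < δ := by linarith
  have hS := (summable_exp_pair hε hℓ hsum (by linarith : 1 < s.re - δ)).mul_left
    (δ⁻¹ * (1 - Real.exp (-ε))⁻¹)
  refine hS.of_norm_bounded fun p => ?_
  have hpos : 0 < ℓ p.1 := hε.trans_le (hℓ p.1)
  have hlin : ℓ p.1 ≤ δ⁻¹ * Real.exp (δ * ℓ p.1) := by
    rw [le_inv_mul_iff₀ hδ0]
    linarith [Real.add_one_le_exp (δ * ℓ p.1)]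
  rw [norm_div, norm_mul, Complex.norm_real, Real.norm_of_nonneg hpos.le]
  calc ℓ p.1 * ‖selbergTerm ℓ p s‖ / ‖1 - selbergTerm ℓ p s‖
      ≤ δ⁻¹ * Real.exp (δ * ℓ p.1) * ‖selbergTerm ℓ p s‖ / (1 - Real.exp (-ε)) := by
        gcongr
        exact le_norm_one_sub_selbergTerm hε hℓ p hs
    _ = δ⁻¹ * (1 - Real.exp (-ε))⁻¹ * Real.exp (-((s.re - δ + p.2) * ℓ p.1)) := by
        rw [norm_selbergTerm, mul_assoc δ⁻¹, ← Real.exp_add, div_eq_mul_inv,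
          show δ * ℓ p.1 + -((s.re + p.2) * ℓ p.1) = -((s.re - δ + p.2) * ℓ p.1) by ring]
        ring

lemma logDeriv_selbergZeta {ε : ℝ} (hε : 0 < ε) {ℓ : ℕ → ℝ} (hℓ : ∀ i, ε ≤ ℓ i)
    (hsum : ∀ σ : ℝ, 1 < σ → Summable (fun i => Real.exp (-(σ * ℓ i))))
    {s : ℂ} (hs : 1 < s.re) :
    logDeriv (selbergZeta ℓ) s =
      ∑' p : ℕ × ℕ, ℓ p.1 * selbergTerm ℓ p s / (1 - selbergTerm ℓ p s) := by
  have hopen : IsOpen {s : ℂ | 1 < s.re} := isOpen_lt continuous_const Complex.continuous_re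
  have hterm (p : ℕ × ℕ) : logDeriv (fun z => 1 - selbergTerm ℓ p z) s =
      ℓ p.1 * selbergTerm ℓ p s / (1 - selbergTerm ℓ p s) := by
    rw [logDeriv_apply, (hasDerivAt_one_sub_selbergTerm ℓ p s).deriv]
  have hev : selbergZeta ℓ =ᶠ[nhds s] fun z => ∏' p, (1 - selbergTerm ℓ p z) := by
    filter_upwards [hopen.mem_nhds hs] with z hz
    exact (tprod_pair_eq_selbergZeta hε hℓ hsum hz).symm
  have h := logDeriv_tprod_eq_tsum hopen hs (f := fun p z => 1 - selbergTerm ℓ p z)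
    (fun p => one_sub_selbergTerm_ne_zero hε hℓ p hs)
    (fun p => (differentiable_one_sub_selbergTerm ℓ p).differentiableOn)
    (by simpa only [hterm] using summable_logDeriv_pair hε hℓ hsum hs)
    (hasProdLocallyUniformlyOn_selberg hε hℓ hsum).multipliableLocallyUniformlyOn
    (by simpa only [tprod_pair_eq_selbergZeta hε hℓ hsum hs]
      using selbergZeta_ne_zero hε hℓ hsum hs)
  simp only [hterm] at h
  rw [← h, logDeriv_apply, logDeriv_apply, hev.deriv_eq, hev.eq_of_nhds]

/-- If `ℓ i ≥ ε > 0` for all `i` and `∑ i, exp (-(σ * ℓ i)) < ∞` for every real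
`σ > 1`, then the double product `Z s = ∏_i ∏_{k ≥ 0} (1 - exp (-(s + k) * ℓ i))` converges
absolutely (i.e. `∑_{i,k} |exp (-(s + k) * ℓ i)| < ∞`) and locally uniformly on
`{s : ℂ | 1 < re s}`, defines a holomorphic function there with no zeros, and its logarithmic
derivative is `Z'/Z (s) = ∑_i ∑_{k ≥ 0} ℓ i * exp (-(s + k) * ℓ i) / (1 - exp (-(s + k) * ℓ i))`
for `re s > 1`. -/
theorem statement4 (ε : ℝ) (hε : 0 < ε) (ℓ : ℕ → ℝ) (hℓ : ∀ i, ε ≤ ℓ i)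
    (hsum : ∀ σ : ℝ, 1 < σ → Summable (fun i => Real.exp (-(σ * ℓ i)))) :
    (∀ s : ℂ, 1 < s.re →
      Summable (fun p : ℕ × ℕ => ‖Complex.exp (-((s + (p.2 : ℂ)) * (ℓ p.1 : ℂ)))‖)) ∧
    TendstoLocallyUniformlyOn
      (fun (N : Finset (ℕ × ℕ)) (s : ℂ) =>
        ∏ p ∈ N, (1 - Complex.exp (-((s + (p.2 : ℂ)) * (ℓ p.1 : ℂ)))))
      (selbergZeta ℓ) atTop {s : ℂ | 1 < s.re} ∧
    DifferentiableOn ℂ (selbergZeta ℓ) {s : ℂ | 1 < s.re} ∧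
    (∀ s : ℂ, 1 < s.re → selbergZeta ℓ s ≠ 0) ∧
    (∀ s : ℂ, 1 < s.re →
      deriv (selbergZeta ℓ) s / selbergZeta ℓ s
        = ∑' (i : ℕ), ∑' (k : ℕ),
            (ℓ i : ℂ) * Complex.exp (-((s + (k : ℂ)) * (ℓ i : ℂ)))
              / (1 - Complex.exp (-((s + (k : ℂ)) * (ℓ i : ℂ))))) := by
  have hopen : IsOpen {s : ℂ | 1 < s.re} := isOpen_lt continuous_const Complex.continuous_re
  have hprod := hasProdLocallyUniformlyOn_selberg hε hℓ hsum
  refine ⟨fun s hs => summable_norm_selbergTerm hε hℓ hsum hs, hprod, ?_,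
    fun s hs => selbergZeta_ne_zero hε hℓ hsum hs, fun s hs => ?_⟩
  · refine TendstoLocallyUniformlyOn.differentiableOn hprod (.of_forall fun N => ?_) hopen
    exact DifferentiableOn.fun_finsetProd fun p _ =>
      (differentiable_one_sub_selbergTerm ℓ p).differentiableOn
  · rw [← logDeriv_apply, logDeriv_selbergZeta hε hℓ hsum hs]
    exact (summable_logDeriv_pair hε hℓ hsum hs).tsum_prod
end

section
/- Let μ be a Borel measure on [0,∞) and C > 0 a constant such that μ([0,T)) ≤ C·T for every real T ≥ 1. Then for every Borel measurable function g : [0,∞) → [0,∞] one has ∫_{[0,∞)} g dμ ≤ C · ∑_{T=0}^∞ (2T+1) · sup_{x ∈ [T,T+1)} g(x). -/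
/-!
Up to a null set, `μ` lives on the union of the unit intervals `[T, T + 1)`, `T : ℕ`. On each of
them the integral of `g` is at most the supremum of `g` times the mass of the interval, and
`μ [T, T + 1) ≤ μ [0, T + 1) ≤ C (T + 1) ≤ C (2 T + 1)`.
-/

open MeasureTheory Set ENNReal

/-- Let `μ` be a Borel measure on `[0,∞)` (modelled as a measure on `ℝ` vanishing
on `(-∞,0)`) with `μ([0,T)) ≤ C·T` for all `T ≥ 1`, where `C > 0`.  Then for every Borel
measurable `g : [0,∞) → [0,∞]` one has
`∫ g dμ ≤ C · ∑_{T=0}^∞ (2T+1) · sup_{x ∈ [T,T+1)} g x`. -/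
theorem statement7 (μ : Measure ℝ) (C : ℝ) (hC : 0 < C)
    (hnull : μ (Set.Iio 0) = 0)
    (hμ : ∀ T : ℝ, 1 ≤ T → μ (Set.Ico 0 T) ≤ ENNReal.ofReal (C * T))
    (g : ℝ → ℝ≥0∞) (hg : Measurable g) :
    ∫⁻ x, g x ∂μ ≤
      ENNReal.ofReal C *
        ∑' T : ℕ, ((2 * T + 1 : ℕ) : ℝ≥0∞) * ⨆ x ∈ Set.Ico (T : ℝ) ((T : ℝ) + 1), g x := by
  have hcover : ∀ᵐ x ∂μ, x ∈ ⋃ T : ℕ, Set.Ico (T : ℝ) ((T : ℝ) + 1) := by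
    rw [ae_iff]
    refine measure_mono_null (fun x hx => ?_) hnull
    by_contra hx0
    have hx0 : 0 ≤ x := not_lt.mp hx0
    exact hx (mem_iUnion.mpr ⟨⌊x⌋₊, Nat.floor_le hx0, Nat.lt_floor_add_one x⟩)
  rw [← Measure.restrict_eq_self_of_ae_mem hcover]
  refine (lintegral_iUnion_le _ _).trans ?_
  rw [← ENNReal.tsum_mul_left]
  refine ENNReal.tsum_le_tsum fun T => ?_
  have hT : (0 : ℝ) ≤ T := T.cast_nonneg
  -- Monotonicity gives the sharper weight `T + 1`, which is at most `2 * T + 1`.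
  have hmass : μ (Set.Ico (T : ℝ) ((T : ℝ) + 1)) ≤
      ENNReal.ofReal C * ((2 * T + 1 : ℕ) : ℝ≥0∞) := by
    calc μ (Set.Ico (T : ℝ) ((T : ℝ) + 1))
        ≤ μ (Set.Ico 0 ((T : ℝ) + 1)) := measure_mono (Set.Ico_subset_Ico_left hT)
      _ ≤ ENNReal.ofReal (C * ((T : ℝ) + 1)) := hμ _ (by linarith)
      _ ≤ ENNReal.ofReal (C * ((2 * T + 1 : ℕ) : ℝ)) := by
          refine ENNReal.ofReal_le_ofReal (mul_le_mul_of_nonneg_left ?_ hC.le)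
          push_cast
          linarith
      _ = ENNReal.ofReal C * ((2 * T + 1 : ℕ) : ℝ≥0∞) := by
          rw [ENNReal.ofReal_mul hC.le, ENNReal.ofReal_natCast]
  set S := ⨆ x ∈ Set.Ico (T : ℝ) ((T : ℝ) + 1), g x with hS
  calc ∫⁻ x in Set.Ico (T : ℝ) ((T : ℝ) + 1), g x ∂μ
      ≤ ∫⁻ _ in Set.Ico (T : ℝ) ((T : ℝ) + 1), S ∂μ :=
        setLIntegral_mono measurable_const fun x hx => le_iSup₂ (f := fun x _ => g x) x hx
    _ = S * μ (Set.Ico (T : ℝ) ((T : ℝ) + 1)) := setLIntegral_const _ _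
    _ ≤ S * (ENNReal.ofReal C * ((2 * T + 1 : ℕ) : ℝ≥0∞)) := by gcongr
    _ = ENNReal.ofReal C * (((2 * T + 1 : ℕ) : ℝ≥0∞) * S) := by ring
end

section
/- Let (μ_n)_{n∈ℕ} be Borel measures on [0,∞), let (V_n) be positive reals, let μ be a Borel measure on [0,∞), and let C > 0. Assume: (i) μ_n([0,T)) ≤ C·V_n·T for every T ≥ 1 and every n; (ii) μ([0,T)) ≤ C·T for every T ≥ 1; (iii) for all reals 0 ≤ a < b one has (1/V_n)·μ_n([a,b)) → μ([a,b)) as n → ∞. Then for every continuous, monotonically decreasing function h : [0,∞) → [0,∞) with ∑_{T=0}^∞ (2T+1)·h(T) < ∞, one has (1/V_n) ∫_{[0,∞)} h dμ_n → ∫_{[0,∞)} h dμ as n → ∞. -/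
/-!
Layer-cake proof. For `t > 0` the superlevel set `{x ≥ 0 | t < h x}` is a lower set of `[0,∞)`
(`h` is decreasing), relatively open (`h` is continuous) and bounded (`h → 0`), hence a half-open
interval `[0, c)`. So `∫ h dν = ∫₀^∞ ν [0, c(t)) dt` for `ν = μ` and for the normalized measures
`ν = μ_n / V_n`, and hypothesis (iii) is exactly pointwise convergence of the integrands. Since
`⌈c(t)⌉` is the number of natural numbers `T` with `t < h T`, the growth hypotheses bound all the
integrands by `C · #{T | t < h T}`, whose integral is `C · ∑ h T < ∞`; dominated convergence
concludes.
-/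

open MeasureTheory Set ENNReal Filter Topology

/-- Superlevel sets of `h` at positive height are half-open intervals `[0, c)`. -/
lemma superlevel_eq_Ico {h : ℝ → ℝ} (hcont : ContinuousOn h (Set.Ici 0))
    (hanti : AntitoneOn h (Set.Ici 0)) (hlim : Tendsto (fun T : ℕ => h T) atTop (𝓝 0))
    {t : ℝ} (ht : 0 < t) :
    ∃ c : ℝ, 0 ≤ c ∧ ∀ x, 0 ≤ x → (t < h x ↔ x < c) := by
  obtain ⟨N, hN⟩ := (hlim.eventually_lt_const ht).exists
  have hN0 : (0 : ℝ) ≤ N := Nat.cast_nonneg N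
  by_cases h0 : t < h 0
  · let S : Set ℝ := {x | 0 ≤ x ∧ t < h x}
    have hS0 : (0 : ℝ) ∈ S := ⟨le_rfl, h0⟩
    have hbdd : BddAbove S := by
      refine ⟨N, fun x hx => ?_⟩
      by_contra! hlt
      have := hanti hN0 hx.1 hlt.le
      linarith [hx.2]
    have hc0 : 0 ≤ sSup S := le_csSup hbdd hS0
    have hcS : ¬ t < h (sSup S) := by
      intro hc
      have hev : ∀ᶠ x in 𝓝[>] (sSup S), t < h x :=
        ((hcont _ hc0).mono (fun x hx => hc0.trans (le_of_lt hx))).eventually_const_lt hc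
      obtain ⟨x, hx, hxc⟩ := (hev.and self_mem_nhdsWithin).exists
      have hxc' : sSup S < x := hxc
      exact absurd (le_csSup hbdd (show x ∈ S from ⟨hc0.trans hxc'.le, hx⟩)) (not_le.2 hxc')
    refine ⟨sSup S, hc0, fun x hx => ⟨fun hxt => ?_, fun hxc => ?_⟩⟩
    · refine lt_of_le_of_ne (le_csSup hbdd ⟨hx, hxt⟩) ?_
      rintro rfl
      exact hcS hxt
    · obtain ⟨y, hy, hxy⟩ := exists_lt_of_lt_csSup ⟨0, hS0⟩ hxc
      exact hy.2.trans_le (hanti hx hy.1 hxy.le)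
  · refine ⟨0, le_rfl, fun x hx => ⟨fun hxt => ?_, fun hxc => absurd hx (not_le.2 hxc)⟩⟩
    exact absurd (hxt.trans_le (hanti (Set.mem_Ici.2 le_rfl) hx hx)) h0

/-- A measure with no mass on the negative axis sees the superlevel set only as `[0, c)`. -/
lemma measure_superlevel {h : ℝ → ℝ} {t c : ℝ}
    (hc : ∀ x, 0 ≤ x → (t < h x ↔ x < c)) (ν : Measure ℝ) (hν : ν (Set.Iio 0) = 0) :
    ν {x | t < h x} = ν (Set.Ico 0 c) := by
  have hae : ∀ᵐ x ∂ν, 0 ≤ x := by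
    rw [ae_iff]
    simpa [Set.Iio] using hν
  refine measure_congr ?_
  filter_upwards [hae] with x hx
  have : (t < h x) = (0 ≤ x ∧ x < c) := propext ⟨fun q => ⟨hx, (hc x hx).1 q⟩,
    fun q => (hc x hx).2 q.2⟩
  exact this

/-- Linear growth bounds `ν [0, c)` by `C ⌈c⌉`, and `⌈c⌉` counts the naturals `T < c`. -/
lemma measure_superlevel_le {h : ℝ → ℝ} (hcont : ContinuousOn h (Set.Ici 0))
    (hanti : AntitoneOn h (Set.Ici 0)) (hlim : Tendsto (fun T : ℕ => h T) atTop (𝓝 0))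
    {t : ℝ} (ht : 0 < t) {C : ℝ} (hC : 0 < C) (ν : Measure ℝ) (hν : ν (Set.Iio 0) = 0)
    (hgrow : ∀ T : ℝ, 1 ≤ T → ν (Set.Ico 0 T) ≤ ENNReal.ofReal (C * T)) :
    ν {x | t < h x} ≤
      ENNReal.ofReal C * ∑' T : ℕ, (Set.Iio (h T)).indicator (fun _ => (1 : ℝ≥0∞)) t := by
  obtain ⟨c, hc0, hc⟩ := superlevel_eq_Ico hcont hanti hlim ht
  rw [measure_superlevel hc ν hν]
  rcases hc0.eq_or_lt with rfl | hcpos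
  · simp
  have hceil : (1 : ℝ) ≤ (⌈c⌉₊ : ℝ) := by
    exact_mod_cast Nat.one_le_iff_ne_zero.2 (Nat.ceil_pos.2 hcpos).ne'
  calc ν (Set.Ico 0 c) ≤ ν (Set.Ico 0 (⌈c⌉₊ : ℝ)) :=
        measure_mono (Set.Ico_subset_Ico_right (Nat.le_ceil c))
    _ ≤ ENNReal.ofReal (C * ⌈c⌉₊) := hgrow _ hceil
    _ = ENNReal.ofReal C * ∑ T ∈ Finset.range ⌈c⌉₊,
          (Set.Iio (h T)).indicator (fun _ => (1 : ℝ≥0∞)) t := by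
        rw [ENNReal.ofReal_mul hC.le, ENNReal.ofReal_natCast]
        congr 1
        rw [Finset.sum_congr rfl (g := fun _ => (1 : ℝ≥0∞))]
        · simp
        · intro T hT
          have hmem : t ∈ Set.Iio (h T) :=
            (hc T (Nat.cast_nonneg T)).2 (Nat.lt_ceil.1 (Finset.mem_range.1 hT))
          simp [hmem]
    _ ≤ _ := by gcongr; exact ENNReal.sum_le_tsum _

lemma lintegral_count_ne_top {h : ℝ → ℝ} (hsum : Summable (fun T : ℕ => h T)) (C : ℝ) :
    ∫⁻ t in Set.Ioi (0 : ℝ), ENNReal.ofReal C *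
      ∑' T : ℕ, (Set.Iio (h T)).indicator (fun _ => (1 : ℝ≥0∞)) t ≠ ∞ := by
  have hm : ∀ T : ℕ, Measurable ((Set.Iio (h T)).indicator (fun _ => (1 : ℝ≥0∞))) :=
    fun T => measurable_const.indicator measurableSet_Iio
  rw [lintegral_const_mul _ (Measurable.tsum hm),
    lintegral_tsum fun T => (hm T).aemeasurable]
  refine ENNReal.mul_ne_top ENNReal.ofReal_ne_top ?_
  have : ∀ T : ℕ, ∫⁻ t in Set.Ioi (0 : ℝ), (Set.Iio (h T)).indicator (fun _ => (1 : ℝ≥0∞)) t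
      = ENNReal.ofReal (h T) := by
    intro T
    rw [lintegral_indicator_const measurableSet_Iio, Measure.restrict_apply measurableSet_Iio,
      Set.inter_comm, Set.Ioi_inter_Iio, Real.volume_Ioo]
    simp
  simp_rw [this]
  exact hsum.tsum_ofReal_ne_top

/-- The layer-cake formula for a Bochner integral against a measure carried by `[0,∞)`. -/
lemma integral_eq_layercake {h : ℝ → ℝ} (hcont : ContinuousOn h (Set.Ici 0))
    (hnonneg : ∀ x ∈ Set.Ici (0 : ℝ), 0 ≤ h x) (ν : Measure ℝ) (hν : ν (Set.Iio 0) = 0) :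
    ∫ x, h x ∂ν = (∫⁻ t in Set.Ioi (0 : ℝ), ν {x | t < h x}).toReal := by
  have hae : ∀ᵐ x ∂ν, x ∈ Set.Ici (0 : ℝ) := by
    rw [ae_iff]
    simpa [Set.Iio] using hν
  have hmeas : AEMeasurable h ν := by
    rw [← Measure.restrict_eq_self_of_ae_mem hae]
    exact hcont.aemeasurable measurableSet_Ici
  have hnn : 0 ≤ᵐ[ν] h := hae.mono hnonneg
  rw [integral_eq_lintegral_of_nonneg_ae hnn hmeas.aestronglyMeasurable,
    lintegral_eq_lintegral_meas_lt ν hnn hmeas]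

/-- Let `(μ_n)` be Borel measures on `[0,∞)` (modelled as measures on `ℝ` vanishing
on `(-∞,0)`), `(V n)` positive reals, `μ` a Borel measure on `[0,∞)`, and `C > 0` with:
(i) `μ_n([0,T)) ≤ C·V_n·T` for `T ≥ 1`; (ii) `μ([0,T)) ≤ C·T` for `T ≥ 1`;
(iii) `(1/V_n)·μ_n([a,b)) → μ([a,b))` for all `0 ≤ a < b`.
Then for every continuous, monotonically decreasing `h : [0,∞) → [0,∞)` with
`∑_{T=0}^∞ (2T+1)·h(T) < ∞`, one has `(1/V_n) ∫ h dμ_n → ∫ h dμ`. -/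
theorem statement8 (μn : ℕ → Measure ℝ) (V : ℕ → ℝ) (hV : ∀ n, 0 < V n)
    (μ : Measure ℝ) (C : ℝ) (hC : 0 < C)
    (hnulln : ∀ n, μn n (Set.Iio 0) = 0) (hnull : μ (Set.Iio 0) = 0)
    (h1 : ∀ n, ∀ T : ℝ, 1 ≤ T → μn n (Set.Ico 0 T) ≤ ENNReal.ofReal (C * V n * T))
    (h2 : ∀ T : ℝ, 1 ≤ T → μ (Set.Ico 0 T) ≤ ENNReal.ofReal (C * T))
    (h3 : ∀ a b : ℝ, 0 ≤ a → a < b →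
      Tendsto (fun n => (μn n (Set.Ico a b)).toReal / V n) atTop
        (𝓝 (μ (Set.Ico a b)).toReal))
    (h : ℝ → ℝ) (hcont : ContinuousOn h (Set.Ici 0)) (hanti : AntitoneOn h (Set.Ici 0))
    (hnonneg : ∀ x ∈ Set.Ici (0 : ℝ), 0 ≤ h x)
    (hsum : Summable (fun T : ℕ => (2 * (T : ℝ) + 1) * h T)) :
    Tendsto (fun n => (∫ x, h x ∂(μn n)) / V n) atTop (𝓝 (∫ x, h x ∂μ)) := by
  have hlinear : Summable (fun T : ℕ => h T) := by
    refine Summable.of_nonneg_of_le (fun T => hnonneg _ (Set.mem_Ici.2 (Nat.cast_nonneg T))) (fun T => ?_) hsum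
    have hT : (0 : ℝ) ≤ T := Nat.cast_nonneg T
    nlinarith [hnonneg T hT]
  have hlim : Tendsto (fun T : ℕ => h T) atTop (𝓝 0) := hlinear.tendsto_atTop_zero
  let ν : ℕ → Measure ℝ := fun n => ENNReal.ofReal (V n)⁻¹ • μn n
  have hνnull : ∀ n, ν n (Set.Iio 0) = 0 := fun n => by simp [ν, hnulln n]
  have hνgrow : ∀ n, ∀ T : ℝ, 1 ≤ T → ν n (Set.Ico 0 T) ≤ ENNReal.ofReal (C * T) := by
    intro n T hT
    have hinv : 0 ≤ (V n)⁻¹ := (inv_pos.2 (hV n)).le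
    calc ν n (Set.Ico 0 T) = ENNReal.ofReal (V n)⁻¹ * μn n (Set.Ico 0 T) := rfl
      _ ≤ ENNReal.ofReal (V n)⁻¹ * ENNReal.ofReal (C * V n * T) := by gcongr; exact h1 n T hT
      _ = ENNReal.ofReal (C * T) := by
          rw [← ENNReal.ofReal_mul hinv]
          congr 1
          have := (hV n).ne'
          field_simp
  have hνint : ∀ n, (∫ x, h x ∂(μn n)) / V n = ∫ x, h x ∂(ν n) := by
    intro n
    rw [integral_smul_measure, ENNReal.toReal_ofReal (inv_pos.2 (hV n)).le, smul_eq_mul]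
    ring
  have hfin : ∀ (ρ : Measure ℝ), (∀ T : ℝ, 1 ≤ T → ρ (Set.Ico 0 T) ≤ ENNReal.ofReal (C * T)) →
      ∀ c, ρ (Set.Ico 0 c) ≠ ∞ := fun ρ hρ c =>
    ne_top_of_le_ne_top ENNReal.ofReal_ne_top
      ((measure_mono (Set.Ico_subset_Ico_right (le_max_left c 1))).trans (hρ _ (le_max_right c 1)))
  have hbound := lintegral_count_ne_top hlinear C
  simp_rw [hνint, integral_eq_layercake hcont hnonneg _ (hνnull _),
    integral_eq_layercake hcont hnonneg μ hnull]
  have hμfin : ∫⁻ t in Set.Ioi (0 : ℝ), μ {x | t < h x} ≠ ∞ :=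
    ne_top_of_le_ne_top hbound (setLIntegral_mono' measurableSet_Ioi fun t ht =>
      measure_superlevel_le hcont hanti hlim ht hC μ hnull h2)
  refine (ENNReal.tendsto_toReal hμfin).comp ?_
  refine tendsto_lintegral_of_dominated_convergence' _ (fun n => ?_) (fun n => ?_) hbound ?_
  · exact (Antitone.measurable fun s t hst =>
      measure_mono fun x (hx : t < h x) => hst.trans_lt hx).aemeasurable
  · exact (ae_restrict_iff' measurableSet_Ioi).2 (ae_of_all _ fun t ht =>
      measure_superlevel_le hcont hanti hlim ht hC (ν n) (hνnull n) (hνgrow n))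
  · refine (ae_restrict_iff' measurableSet_Ioi).2 (ae_of_all _ fun t ht => ?_)
    obtain ⟨c, hc0, hc⟩ := superlevel_eq_Ico hcont hanti hlim ht
    simp_rw [measure_superlevel hc _ (hνnull _), measure_superlevel hc μ hnull]
    rcases hc0.eq_or_lt with rfl | hcpos
    · simp
    rw [← ENNReal.tendsto_toReal_iff (fun n => hfin _ (hνgrow n) c) (hfin μ h2 c)]
    refine (h3 0 c le_rfl hcpos).congr fun n => ?_
    change _ = (ENNReal.ofReal (V n)⁻¹ * μn n (Set.Ico 0 c)).toReal
    rw [ENNReal.toReal_mul, ENNReal.toReal_ofReal (inv_pos.2 (hV n)).le]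
    ring
end
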